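/- Under Assumptions 1, 2 and 3, suppose in addition ‖x(t)‖_v ≤ x̄ almost surely for all t, and α_t = h/(t+t0) with h > 2/σ and t0 ≥ max(4h, τ). Then for each t ≥ τ and each δ ∈ (0,1), with probability at least 1 − δ, ‖Σ_{k=τ}^{t} α_k B̃_{k,t} ε(k)‖_v ≤ 6 ε̄ √( ((τ+1)h/(σ(t+1+t0))) · log(2(τ+1) t n/δ) ), where ε̄ = 2x̄ + C + w̄/v̲. -/

import Mathlib

/-!
Almost surely, the random weights `α_k ∏ (1 - α_l d_l)` are the deterministic weights
`α_k ∏ (1 - α_l σ)` damped by the ratios `(1 - α_l d_l) / (1 - α_l σ) ∈ [0, 1]`, and a damped sum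
is a convex combination of the suffix sums `∑_{j ≤ k ≤ t}`. This removes the randomness from the
weights at the price of a union bound over the starting points `j`.

A suffix sum with deterministic weights splits into the residue classes modulo `τ + 1`. Along one
class the noise is an ordinary bounded martingale difference sequence, so the class sum is
sub-Gaussian, and adding up the `τ + 1` classes multiplies the variance proxy by at most `τ + 1`.
The weights satisfy `∑ (α_k ∏ (1 - α_l σ))² ≤ 2 h / (σ (t + 1 + t₀))`; hence the variance proxy is
`2 (τ + 1) h ε̄² / (σ (t + 1 + t₀))` and the argument gives the constant `2` in place of `6`.
-/

open MeasureTheory Finset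

/-- Weighted infinity norm `‖x‖_v = max_i |x_i| / v_i`. -/
noncomputable def vnorm {n : ℕ} (v x : Fin n → ℝ) : ℝ := ⨆ i, |x i| / v i
section SubGaussian

open ProbabilityTheory Real
open scoped NNReal

variable {Ω : Type*} {m m0 : MeasurableSpace Ω} {μ : Measure Ω}

lemma condExp_mul_eq_zero {f g : Ω → ℝ} (hf : StronglyMeasurable[m] f)
    (hfg : Integrable (f * g) μ) (hg : Integrable g μ) (h : μ[g | m] =ᵐ[μ] 0) :
    μ[f * g | m] =ᵐ[μ] 0 := by
  filter_upwards [condExp_mul_of_stronglyMeasurable_left hf hfg hg, h] with ω hpull hzero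
  rw [hpull, Pi.mul_apply, hzero, Pi.zero_apply, mul_zero]

lemma integral_mul_eq_zero_of_condExp_eq_zero (hm : m ≤ m0) [SigmaFinite (μ.trim hm)]
    {f g : Ω → ℝ} (hf : StronglyMeasurable[m] f) (hfg : Integrable (f * g) μ)
    (hg : Integrable g μ) (h : μ[g | m] =ᵐ[μ] 0) : ∫ ω, f ω * g ω ∂μ = 0 :=
  calc ∫ ω, f ω * g ω ∂μ = ∫ ω, (μ[f * g | m]) ω ∂μ := (integral_condExp hm).symm
    _ = 0 := integral_eq_zero_of_ae (condExp_mul_eq_zero hf hfg hg h)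

lemma exp_mul_le_cosh_add_sinh_div_mul {b y : ℝ} (hy : |y| ≤ b) (s : ℝ) :
    exp (s * y) ≤ cosh (s * b) + sinh (s * b) / b * y := by
  have hb : 0 ≤ b := (abs_nonneg y).trans hy
  have hyb : y / b * b = y :=
    div_mul_cancel_of_imp fun h0 => abs_nonpos_iff.mp (hy.trans_eq h0)
  have hratio : |y / b| ≤ 1 := by
    rw [abs_div, abs_of_nonneg hb]
    exact div_le_one_of_le₀ hy hb
  calc exp (s * y) = exp (y / b * (s * b)) := by rw [mul_left_comm, hyb]
    _ ≤ cosh (s * b) + y / b * sinh (s * b) := exp_mul_le_cosh_add_mul_sinh hratio _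
    _ = cosh (s * b) + sinh (s * b) / b * y := by ring

/-- Orthogonality to the `m`-measurable `exp (s * X)` removes the linear term of the chord bound
for `exp (s * Y)`, so no conditional distributions are needed. -/
lemma hasSubgaussianMGF_add_of_condExp_eq_zero [IsFiniteMeasure μ] (hm : m ≤ m0) {X Y : Ω → ℝ}
    {c : ℝ≥0} {b : ℝ} (hXm : Measurable[m] X) (hX : HasSubgaussianMGF X c μ)
    (hYm : AEStronglyMeasurable Y μ) (hYb : ∀ᵐ ω ∂μ, |Y ω| ≤ b) (hY : μ[Y | m] =ᵐ[μ] 0) :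
    HasSubgaussianMGF (fun ω => X ω + Y ω) (c + ‖b‖₊ ^ 2) μ := by
  have hexpY (s : ℝ) : ∀ᵐ ω ∂μ, ‖exp (s * Y ω)‖ ≤ exp (|s| * b) := by
    filter_upwards [hYb] with ω hω
    rw [norm_of_nonneg (exp_pos _).le, exp_le_exp]
    calc s * Y ω ≤ |s| * |Y ω| := (le_abs_self _).trans_eq (abs_mul _ _)
      _ ≤ |s| * b := by gcongr
  have hint (s : ℝ) : Integrable (fun ω => exp (s * (X ω + Y ω))) μ := by
    simp_rw [mul_add, exp_add]
    exact (hX.integrable_exp_mul s).mul_bdd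
      (continuous_exp.comp_aestronglyMeasurable (hYm.const_mul s)) (hexpY s)
  refine ⟨hint, fun s => ?_⟩
  have hXYi : Integrable (fun ω => exp (s * X ω) * Y ω) μ :=
    (hX.integrable_exp_mul s).mul_bdd hYm hYb
  have horth : ∫ ω, exp (s * X ω) * Y ω ∂μ = 0 :=
    integral_mul_eq_zero_of_condExp_eq_zero hm
      (measurable_exp.comp (hXm.const_mul s)).stronglyMeasurable hXYi (.of_bound hYm b hYb) hY
  calc mgf (fun ω => X ω + Y ω) μ s
      ≤ ∫ ω, (cosh (s * b) * exp (s * X ω) + sinh (s * b) / b * (exp (s * X ω) * Y ω)) ∂μ := by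
        refine integral_mono_ae (hint s)
          (((hX.integrable_exp_mul s).const_mul _).add (hXYi.const_mul _)) ?_
        filter_upwards [hYb] with ω hω
        calc exp (s * (X ω + Y ω)) = exp (s * X ω) * exp (s * Y ω) := by rw [mul_add, exp_add]
          _ ≤ exp (s * X ω) * (cosh (s * b) + sinh (s * b) / b * Y ω) := by
              gcongr
              exact exp_mul_le_cosh_add_sinh_div_mul hω s
          _ = _ := by ring
    _ = cosh (s * b) * mgf X μ s := by
        rw [integral_add ((hX.integrable_exp_mul s).const_mul _) (hXYi.const_mul _),
          integral_const_mul, integral_const_mul, horth, mul_zero, add_zero, mgf]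
    _ ≤ exp ((s * b) ^ 2 / 2) * exp (c * s ^ 2 / 2) := by
        gcongr
        exacts [mgf_nonneg, cosh_le_exp_half_sq _, hX.mgf_le s]
    _ = exp ((c + ‖b‖₊ ^ 2 : ℝ≥0) * s ^ 2 / 2) := by
        rw [← exp_add]
        push_cast
        rw [norm_eq_abs, sq_abs]
        ring_nf

lemma hasSubgaussianMGF_mono {X : Ω → ℝ} {c c' : ℝ≥0} (hX : HasSubgaussianMGF X c μ)
    (hc : c ≤ c') : HasSubgaussianMGF X c' μ :=
  ⟨hX.integrable_exp_mul, fun s => (hX.mgf_le s).trans (by gcongr)⟩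

lemma hasSubgaussianMGF_sum [IsZeroOrProbabilityMeasure μ] {ι : Type*} {X : ι → Ω → ℝ}
    {c : ι → ℝ≥0} (s : Finset ι) (hX : ∀ i ∈ s, HasSubgaussianMGF (X i) (c i) μ) :
    HasSubgaussianMGF (fun ω => ∑ i ∈ s, X i ω) (#s * ∑ i ∈ s, c i) μ := by
  classical
  suffices HasSubgaussianMGF (fun ω => ∑ i ∈ s, X i ω) ((∑ i ∈ s, (c i).sqrt) ^ 2) μ by
    refine hasSubgaussianMGF_mono this (sq_sum_le_card_mul_sum_sq.trans_eq ?_)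
    simp only [NNReal.sq_sqrt]
  induction s using Finset.induction_on with
  | empty => simp
  | insert a s ha ih =>
    have hsum := (hX a (mem_insert_self a s)).add (ih fun i hi => hX i (mem_insert_of_mem hi))
    simpa only [sum_insert ha, NNReal.sqrt_sq] using hsum

lemma measure_sqrt_lt_abs_le [IsFiniteMeasure μ] {X : Ω → ℝ} {c : ℝ≥0}
    (hX : HasSubgaussianMGF X c μ) {L : ℝ} (hL : 0 ≤ L) :
    μ {ω | √(2 * c * L) < |X ω|} ≤ ENNReal.ofReal (2 * exp (-L)) := by
  rcases eq_or_ne c 0 with rfl | hc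
  -- the Chernoff exponent `-u ^ 2 / (2 * c)` is junk for `c = 0`
  · have hnull : ∀ᵐ ω ∂μ, ¬ √(2 * ((0 : ℝ≥0) : ℝ) * L) < |X ω| := by
      filter_upwards [hX.ae_eq_zero_of_hasSubgaussianMGF_zero] with ω hω
      simp [hω]
    exact (measure_eq_zero_iff_ae_notMem.mpr hnull).trans_le zero_le
  set u := √(2 * c * L)
  have hu : -u ^ 2 / (2 * c) = -L := by
    rw [sq_sqrt (by positivity)]
    field_simp
  have hupper := hX.measure_ge_le (sqrt_nonneg (2 * c * L))
  have hlower := hX.neg.measure_ge_le (sqrt_nonneg (2 * c * L))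
  rw [hu] at hupper hlower
  have hsub : {ω | u < |X ω|} ⊆ {ω | u ≤ X ω} ∪ {ω | u ≤ (-X) ω} := fun ω hω =>
    (lt_abs.mp hω).imp le_of_lt fun h => (show u ≤ -X ω from h.le)
  rw [← ofReal_measureReal]
  refine ENNReal.ofReal_le_ofReal ((measureReal_mono hsub).trans ?_)
  linarith [measureReal_union_le (μ := μ) {ω | u ≤ X ω} {ω | u ≤ (-X) ω}]

lemma measure_exists_sqrt_log_lt_abs_le [IsFiniteMeasure μ] {ι : Type*} {X : ι → Ω → ℝ}
    {c : ι → ℝ≥0} {s : Finset ι} (hX : ∀ i ∈ s, HasSubgaussianMGF (X i) (c i) μ)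
    {N δ : ℝ} (hN : #s ≤ N) (hδ0 : 0 < δ) (hδ1 : δ ≤ 1) :
    μ {ω | ∃ i ∈ s, √(2 * c i * log (2 * N / δ)) < |X i ω|} ≤ ENNReal.ofReal δ := by
  have htail : ∀ i ∈ s, μ {ω | √(2 * c i * log (2 * N / δ)) < |X i ω|} ≤
      ENNReal.ofReal (δ / N) := fun i hi => by
    have hN1 : 1 ≤ N := le_trans (by exact_mod_cast card_pos.mpr ⟨i, hi⟩) hN
    have hlog : 0 ≤ log (2 * N / δ) := log_nonneg (by rw [le_div_iff₀ hδ0]; linarith)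
    refine (measure_sqrt_lt_abs_le (hX i hi) hlog).trans_eq ?_
    rw [exp_neg, exp_log (by positivity)]
    field_simp
  have hN0 : 0 ≤ N := (Nat.cast_nonneg _).trans hN
  calc μ {ω | ∃ i ∈ s, √(2 * c i * log (2 * N / δ)) < |X i ω|}
      = μ (⋃ i ∈ s, {ω | √(2 * c i * log (2 * N / δ)) < |X i ω|}) := by
        congr 1
        ext ω
        simp
    _ ≤ ∑ _i ∈ s, ENNReal.ofReal (δ / N) :=
        (measure_biUnion_finset_le _ _).trans (sum_le_sum htail)
    _ = ENNReal.ofReal (#s / N * δ) := by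
        rw [sum_const, nsmul_eq_mul, ← ENNReal.ofReal_natCast,
          ← ENNReal.ofReal_mul (Nat.cast_nonneg _)]
        ring_nf
    _ ≤ ENNReal.ofReal δ :=
        ENNReal.ofReal_le_ofReal (mul_le_of_le_one_left hδ0.le (div_le_one_of_le₀ hN hN0))

end SubGaussian

section LaggedMartingaleDiff

open ProbabilityTheory
open scoped NNReal

variable {Ω : Type*} {m m' m0 : MeasurableSpace Ω} {μ : Measure Ω} {ℱ : Filtration ℕ m0}
  {τ : ℕ} {Y : ℕ → Ω → ℝ} {b : ℕ → ℝ}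

/-- A martingale difference sequence with lag `τ`, almost surely bounded by `b`: the term `Y k` is
`ℱ (k + 1)`-measurable but centred only given `ℱ (k - τ)`. Lag `0` is an ordinary martingale
difference sequence; the subtraction is truncated, so the first terms are centred given `ℱ 0`. -/
structure BoundedLaggedMartingaleDiff (μ : Measure Ω) (ℱ : Filtration ℕ m0) (τ : ℕ)
    (Y : ℕ → Ω → ℝ) (b : ℕ → ℝ) : Prop where
  measurable : ∀ k, Measurable[ℱ (k + 1)] (Y k)
  abs_le : ∀ k, ∀ᵐ ω ∂μ, |Y k ω| ≤ b k
  condExp_eq_zero : ∀ k, μ[Y k | ℱ (k - τ)] =ᵐ[μ] 0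

namespace BoundedLaggedMartingaleDiff

lemma const_mul (hY : BoundedLaggedMartingaleDiff μ ℱ τ Y b) (a : ℕ → ℝ) :
    BoundedLaggedMartingaleDiff μ ℱ τ (fun k ω => a k * Y k ω) fun k => |a k| * b k where
  measurable k := (hY.measurable k).const_mul (a k)
  abs_le k := by
    filter_upwards [hY.abs_le k] with ω hω
    rw [abs_mul]
    gcongr
  condExp_eq_zero k := by
    filter_upwards [condExp_smul (a k) (Y k) (ℱ (k - τ)), hY.condExp_eq_zero k] with ω hsmul hzero
    exact hsmul.trans (by rw [Pi.smul_apply, hzero, Pi.zero_apply, smul_zero])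

/-- Along indices more than `τ` apart, each term is centred given the past of the sum. -/
lemma hasSubgaussianMGF_sum_of_separated [IsZeroOrProbabilityMeasure μ]
    (hY : BoundedLaggedMartingaleDiff μ ℱ τ Y b) (A : Finset ℕ)
    (hA : ∀ j ∈ A, ∀ k ∈ A, j < k → j + τ < k) :
    HasSubgaussianMGF (fun ω => ∑ k ∈ A, Y k ω) (∑ k ∈ A, ‖b k‖₊ ^ 2) μ := by
  induction A using Finset.induction_on_max with
  | empty => simp
  | insert a A hlt ih =>
    have ha : a ∉ A := fun h => lt_irrefl a (hlt a h)
    have hpast : Measurable[ℱ (a - τ)] fun ω => ∑ k ∈ A, Y k ω :=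
      Finset.measurable_fun_sum A fun k hk => by
        have := hA k (mem_insert_of_mem hk) a (mem_insert_self a A) (hlt k hk)
        exact (hY.measurable k).mono (ℱ.mono (by lia)) le_rfl
    simp only [sum_insert ha, add_comm (Y a _), add_comm (‖b a‖₊ ^ 2)]
    exact hasSubgaussianMGF_add_of_condExp_eq_zero (ℱ.le _) hpast
      (ih fun j hj k hk => hA j (mem_insert_of_mem hj) k (mem_insert_of_mem hk))
      ((hY.measurable a).mono (ℱ.le _) le_rfl).aestronglyMeasurable (hY.abs_le a)
      (hY.condExp_eq_zero a)

/-- The residue classes modulo `τ + 1` are separated; recombining them costs the factor `τ + 1`. -/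
lemma hasSubgaussianMGF_sum [IsZeroOrProbabilityMeasure μ]
    (hY : BoundedLaggedMartingaleDiff μ ℱ τ Y b) (A : Finset ℕ) :
    HasSubgaussianMGF (fun ω => ∑ k ∈ A, Y k ω) ((τ + 1) * ∑ k ∈ A, ‖b k‖₊ ^ 2) μ := by
  have hmod : ∀ k ∈ A, k % (τ + 1) ∈ range (τ + 1) := fun k _ =>
    mem_range.mpr (Nat.mod_lt k τ.succ_pos)
  have hclass : ∀ j ∈ range (τ + 1), HasSubgaussianMGF
      (fun ω => ∑ k ∈ A with k % (τ + 1) = j, Y k ω)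
      (∑ k ∈ A with k % (τ + 1) = j, ‖b k‖₊ ^ 2) μ := fun j _ => by
    refine hY.hasSubgaussianMGF_sum_of_separated _ fun k hk l hl hkl => ?_
    have hmodEq : k ≡ l [MOD τ + 1] := (mem_filter.mp hk).2.trans (mem_filter.mp hl).2.symm
    have := Nat.le_of_dvd (by lia) ((Nat.modEq_iff_dvd' hkl.le).mp hmodEq)
    lia
  simpa only [sum_fiberwise_of_maps_to hmod, card_range, Nat.cast_add_one] using
    _root_.hasSubgaussianMGF_sum (range (τ + 1)) hclass

end BoundedLaggedMartingaleDiff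

/-- The noise of the scheme has this form, with `I` the indicator of an update and `m' ≤ m` the
σ-algebras of the times `k - τ` and `k`. -/
lemma condExp_centred_mul_add_mul_eq_zero [IsFiniteMeasure μ] (hm' : m' ≤ m) (hm : m ≤ m0)
    {I G w : Ω → ℝ} {a g W : ℝ} (hI : Measurable[m] I) (hIb : ∀ᵐ ω ∂μ, |I ω| ≤ a)
    (hG : Measurable[m'] G) (hGb : ∀ᵐ ω ∂μ, |G ω| ≤ g) (hwm : AEStronglyMeasurable w μ)
    (hwb : ∀ᵐ ω ∂μ, |w ω| ≤ W) (hw : μ[w | m] =ᵐ[μ] 0) :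
    μ[G * (I - μ[I | m']) + I * w | m'] =ᵐ[μ] 0 := by
  have hIm0 : AEStronglyMeasurable I μ := (hI.mono hm le_rfl).aestronglyMeasurable
  have hIi : Integrable I μ := .of_bound hIm0 a hIb
  have hwi : Integrable w μ := .of_bound hwm W hwb
  have hIwi : Integrable (I * w) μ := hwi.bdd_mul hIm0 hIb
  have hdev : Integrable (I - μ[I | m']) μ := hIi.sub integrable_condExp
  have hGdev : Integrable (G * (I - μ[I | m'])) μ :=
    hdev.bdd_mul (hG.mono (hm'.trans hm) le_rfl).aestronglyMeasurable hGb
  have hcentred : μ[I - μ[I | m'] | m'] =ᵐ[μ] 0 := by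
    filter_upwards [condExp_sub hIi integrable_condExp m',
      condExp_condExp_of_le (μ := μ) (f := I) le_rfl (hm'.trans hm)] with ω hsub hidem
    rw [hsub, Pi.sub_apply, hidem, sub_self, Pi.zero_apply]
  have hnoise : μ[I * w | m'] =ᵐ[μ] 0 :=
    calc μ[I * w | m'] =ᵐ[μ] μ[μ[I * w | m] | m'] := (condExp_condExp_of_le hm' hm).symm
      _ =ᵐ[μ] μ[(0 : Ω → ℝ) | m'] :=
        condExp_congr_ae (condExp_mul_eq_zero hI.stronglyMeasurable hIwi hwi hw)
      _ = 0 := condExp_zero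
  filter_upwards [condExp_add hGdev hIwi m', hnoise,
    condExp_mul_eq_zero hG.stronglyMeasurable hGdev hdev hcentred] with ω hadd hω hω'
  rw [hadd, Pi.add_apply, hω, hω', Pi.zero_apply, add_zero]

lemma condExp_mem_Icc [IsFiniteMeasure μ] (hm : m ≤ m0) {f : Ω → ℝ} {a b : ℝ}
    (hf : AEStronglyMeasurable f μ) (hab : ∀ᵐ ω ∂μ, f ω ∈ Set.Icc a b) :
    ∀ᵐ ω ∂μ, (μ[f | m]) ω ∈ Set.Icc a b := by
  refine (convex_Icc a b).condExp_mem hm (.of_bound hf (max |a| |b|) ?_) isClosed_Icc hab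
  filter_upwards [hab] with ω hω using abs_le_max_abs_abs hω.1 hω.2

lemma boundedLaggedMartingaleDiff_centred_mul_add_mul [IsFiniteMeasure μ]
    {I G w : ℕ → Ω → ℝ} {g W : ℕ → ℝ} (hI : ∀ k, Measurable[ℱ k] (I k))
    (hI01 : ∀ k ω, I k ω ∈ Set.Icc 0 1)
    (hG : ∀ k, Measurable[ℱ (k - τ)] (G k)) (hGb : ∀ k, ∀ᵐ ω ∂μ, |G k ω| ≤ g k)
    (hw : ∀ k, Measurable[ℱ (k + 1)] (w k)) (hwb : ∀ k, ∀ᵐ ω ∂μ, |w k ω| ≤ W k)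
    (hw0 : ∀ k, μ[w k | ℱ k] =ᵐ[μ] 0) :
    BoundedLaggedMartingaleDiff μ ℱ τ (fun k => G k * (I k - μ[I k | ℱ (k - τ)]) + I k * w k)
      fun k => g k + W k := by
  have hlag (k) : ℱ (k - τ) ≤ ℱ k := ℱ.mono (k.sub_le τ)
  have hsucc (k) : ℱ k ≤ ℱ (k + 1) := ℱ.mono k.le_succ
  have hIb (k) : ∀ᵐ ω ∂μ, |I k ω| ≤ 1 := ae_of_all _ fun ω =>
    abs_le.mpr ⟨by linarith [(hI01 k ω).1], (hI01 k ω).2⟩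
  have hIm (k) : AEStronglyMeasurable (I k) μ := ((hI k).mono (ℱ.le k) le_rfl).aestronglyMeasurable
  refine ⟨fun k => ?_, fun k => ?_, fun k => ?_⟩
  · have hI' := (hI k).mono (hsucc k) le_rfl
    have hlag' := (hlag k).trans (hsucc k)
    exact (((hG k).mono hlag' le_rfl).mul
      (hI'.sub (stronglyMeasurable_condExp.measurable.mono hlag' le_rfl))).add (hI'.mul (hw k))
  · filter_upwards [hIb k, hGb k, hwb k, condExp_mem_Icc (ℱ.le (k - τ)) (hIm k)
      (ae_of_all _ (hI01 k))] with ω hIω hGω hwω hdω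
    have hdev : |I k ω - (μ[I k | ℱ (k - τ)]) ω| ≤ 1 :=
      Real.dist_le_of_mem_Icc_01 (hI01 k ω) hdω
    calc |G k ω * (I k ω - (μ[I k | ℱ (k - τ)]) ω) + I k ω * w k ω|
        ≤ |G k ω| * |I k ω - (μ[I k | ℱ (k - τ)]) ω| + |I k ω| * |w k ω| := by
          simpa only [abs_mul] using abs_add_le (G k ω * _) (I k ω * w k ω)
      _ ≤ g k + W k := add_le_add
          ((mul_le_of_le_one_right (abs_nonneg _) hdev).trans hGω)
          ((mul_le_of_le_one_left (abs_nonneg _) hIω).trans hwω)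
  · exact condExp_centred_mul_add_mul_eq_zero (hlag k) (ℱ.le k) (hI k) (hIb k) (hG k) (hGb k)
      ((hw k).mono (ℱ.le _) le_rfl).aestronglyMeasurable (hwb k) (hw0 k)

end LaggedMartingaleDiff

section Damping

variable {𝕜 E : Type*} [CommRing 𝕜] [PartialOrder 𝕜] [IsOrderedAddMonoid 𝕜] [AddCommGroup E]
  [Module 𝕜 E]

/-- The damped sum is a convex combination of the suffix sums. -/
lemma sum_prod_smul_mem_of_convex {K : Set E} (hK : Convex 𝕜 K) {r : ℕ → 𝕜} {a : ℕ → E}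
    {s t : ℕ} (hst : s ≤ t) (hr : ∀ l ∈ Icc (s + 1) t, r l ∈ Set.Icc 0 1)
    (ha : ∀ j ∈ Icc s t, ∑ k ∈ Icc j t, a k ∈ K) :
    ∑ k ∈ Icc s t, (∏ l ∈ Icc (k + 1) t, r l) • a k ∈ K := by
  induction t, hst using Nat.le_induction generalizing K with
  | base => simpa using ha s (by simp)
  | succ t hst ih =>
    have hrt := hr (t + 1) (right_mem_Icc.mpr (by lia))
    have hdamped : a (t + 1) + ∑ k ∈ Icc s t, (∏ l ∈ Icc (k + 1) t, r l) • a k ∈ K := by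
      refine ih (hK.translate_preimage_right (a (t + 1)))
        (fun l hl => hr l (Icc_subset_Icc_right t.le_succ hl)) fun j hj => ?_
      have hj' := mem_Icc.mp hj
      simpa only [Set.mem_preimage, sum_Icc_succ_top (hj'.2.trans t.le_succ), add_comm] using
        ha j (mem_Icc.mpr ⟨hj'.1, hj'.2.trans t.le_succ⟩)
    have hlast : a (t + 1) ∈ K := by
      simpa using ha (t + 1) (right_mem_Icc.mpr (by lia))
    have hrec : ∑ k ∈ Icc s (t + 1), (∏ l ∈ Icc (k + 1) (t + 1), r l) • a k =
        r (t + 1) • (a (t + 1) + ∑ k ∈ Icc s t, (∏ l ∈ Icc (k + 1) t, r l) • a k) +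
          (1 - r (t + 1)) • a (t + 1) := by
      have hprod : ∀ k ∈ Icc s t, (∏ l ∈ Icc (k + 1) (t + 1), r l) • a k =
          r (t + 1) • (∏ l ∈ Icc (k + 1) t, r l) • a k := fun k hk => by
        rw [prod_Icc_succ_top (by grind), mul_comm, mul_smul]
      rw [sum_Icc_succ_top (by lia), sum_congr rfl hprod, ← smul_sum]
      simp only [Icc_eq_empty_of_lt (Nat.lt_succ_self (t + 1)), prod_empty]
      module
    rw [hrec]
    exact hK hdamped hlast hrt.1 (sub_nonneg.mpr hrt.2) (by ring)

/-- The deterministic counterpart of the weight `α_k B̃_{k,t}`, obtained by replacing the random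
exploration probabilities with their lower bound `σ`. -/
def dampedWeight (α : ℕ → ℝ) (σ : ℝ) (t k : ℕ) : ℝ := α k * ∏ l ∈ Icc (k + 1) t, (1 - α l * σ)

lemma sum_sq_dampedWeight_succ (α : ℕ → ℝ) (σ : ℝ) {s t : ℕ} (hst : s ≤ t + 1) :
    ∑ k ∈ Icc s (t + 1), dampedWeight α σ (t + 1) k ^ 2 =
      (1 - α (t + 1) * σ) ^ 2 * ∑ k ∈ Icc s t, dampedWeight α σ t k ^ 2 + α (t + 1) ^ 2 := by
  rw [sum_Icc_succ_top hst, mul_sum]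
  congr 1
  · refine sum_congr rfl fun k hk => ?_
    rw [dampedWeight, dampedWeight, prod_Icc_succ_top (by grind)]
    ring
  · simp [dampedWeight]

lemma sum_sq_dampedWeight_le {α : ℕ → ℝ} {h t₀ σ : ℝ} (hα : ∀ t, α t = h / (t + t₀)) (hσ : 0 < σ)
    (hσh : 2 ≤ σ * h) (ht₀ : σ * h ≤ t₀) (t : ℕ) :
    ∑ k ∈ Icc 1 t, dampedWeight α σ t k ^ 2 ≤ 2 * h / (σ * (t + 1 + t₀)) := by
  have hh : 0 < h := pos_of_mul_pos_right (two_pos.trans_le hσh) hσ.le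
  induction t with
  | zero =>
    have : 0 < t₀ := by linarith
    rw [Icc_eq_empty_of_lt one_pos, sum_empty]
    positivity
  | succ t ih =>
    obtain ⟨q, hq⟩ : ∃ q : ℝ, q = t + 1 + t₀ := ⟨_, rfl⟩
    have hαq : α (t + 1) = h / q := by rw [hα, hq, Nat.cast_add_one]
    have hhq : σ * h ≤ q := by linarith [Nat.cast_nonneg (α := ℝ) t]
    have hq0 : 0 < q := by linarith
    have hx0 : 0 ≤ h / q * σ := by positivity
    have hx1 : h / q * σ ≤ 1 := by rwa [div_mul_eq_mul_div, div_le_one hq0, mul_comm]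
    rw [← hq] at ih
    calc ∑ k ∈ Icc 1 (t + 1), dampedWeight α σ (t + 1) k ^ 2
        = (1 - h / q * σ) ^ 2 * ∑ k ∈ Icc 1 t, dampedWeight α σ t k ^ 2 + (h / q) ^ 2 := by
          rw [sum_sq_dampedWeight_succ α σ (by lia), hαq]
      _ ≤ (1 - h / q * σ) * (2 * h / (σ * q)) + (h / q) ^ 2 := by
          gcongr
          exact pow_le_of_le_one (sub_nonneg.mpr hx1) (sub_le_self 1 hx0) two_ne_zero
      _ = 2 * h / (σ * (q + 1)) - h * ((σ * h - 2) * q + σ * h) / (σ * q ^ 2 * (q + 1)) := by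
          field_simp
          ring
      _ ≤ 2 * h / (σ * (q + 1)) := by
          have : 0 ≤ σ * h - 2 := sub_nonneg.mpr hσh
          exact sub_le_self _ (by positivity)
      _ = 2 * h / (σ * ((t + 1 : ℕ) + 1 + t₀)) := by
          rw [hq]
          push_cast
          ring

lemma abs_sum_mul_prod_le_of_suffix {α d y : ℕ → ℝ} {σ M : ℝ} {s t : ℕ} (hst : s ≤ t)
    (hα : ∀ l ∈ Icc (s + 1) t, α l ∈ Set.Ico 0 1) (hd : ∀ l ∈ Icc (s + 1) t, d l ∈ Set.Icc σ 1)
    (hM : ∀ j ∈ Icc s t, |∑ k ∈ Icc j t, dampedWeight α σ t k * y k| ≤ M) :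
    |∑ k ∈ Icc s t, α k * ((∏ l ∈ Icc (k + 1) t, (1 - α l * d l)) * y k)| ≤ M := by
  have hpos : ∀ l ∈ Icc (s + 1) t, 0 < 1 - α l * σ := fun l hl => by
    nlinarith [(hα l hl).1, (hα l hl).2, (hd l hl).1, (hd l hl).2]
  have hratio : ∀ l ∈ Icc (s + 1) t, (1 - α l * d l) / (1 - α l * σ) ∈ Set.Icc (0 : ℝ) 1 :=
    fun l hl => by
      obtain ⟨hα0, hα1⟩ := hα l hl
      obtain ⟨hσd, hd1⟩ := hd l hl
      exact ⟨div_nonneg (by nlinarith) (hpos l hl).le,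
        (div_le_one (hpos l hl)).mpr (by gcongr)⟩
  have hweight : ∀ k ∈ Icc s t, α k * ((∏ l ∈ Icc (k + 1) t, (1 - α l * d l)) * y k) =
      (∏ l ∈ Icc (k + 1) t, (1 - α l * d l) / (1 - α l * σ)) • (dampedWeight α σ t k * y k) :=
    fun k hk => by
      have hprod : ∏ l ∈ Icc (k + 1) t, (1 - α l * σ) ≠ 0 :=
        prod_ne_zero_iff.mpr fun l hl => (hpos l (by grind)).ne'
      rw [prod_div_distrib, dampedWeight, smul_eq_mul]
      linear_combination
        -(α k * y k) * div_mul_cancel₀ (∏ l ∈ Icc (k + 1) t, (1 - α l * d l)) hprod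
  rw [sum_congr rfl hweight, abs_le, ← Set.mem_Icc]
  exact sum_prod_smul_mem_of_convex (convex_Icc (-M) M) hst hratio fun j hj => abs_le.mp (hM j hj)

end Damping

section WeightedNorm

variable {n : ℕ} {v x : Fin n → ℝ}

lemma abs_apply_le_vnorm_mul (hv : ∀ i, 0 < v i) (x : Fin n → ℝ) (i : Fin n) :
    |x i| ≤ vnorm v x * v i := by
  rw [← div_le_iff₀ (hv i)]
  exact le_ciSup (f := fun i => |x i| / v i) (Set.finite_range _).bddAbove i

lemma vnorm_nonneg (hv : ∀ i, 0 ≤ v i) (x : Fin n → ℝ) : 0 ≤ vnorm v x :=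
  Real.iSup_nonneg fun i => div_nonneg (abs_nonneg _) (hv i)

lemma vnorm_le {M : ℝ} (hv : ∀ i, 0 < v i) (hM : 0 ≤ M) (hx : ∀ i, |x i| ≤ M * v i) :
    vnorm v x ≤ M :=
  Real.iSup_le (fun i => (div_le_iff₀ (hv i)).mpr (hx i)) hM

lemma le_div_iInf_mul {a : ℝ} (hv : ∀ i, 0 < v i) (ha : 0 ≤ a) (i : Fin n) :
    a ≤ a / (⨅ j, v j) * v i := by
  have : Nonempty (Fin n) := ⟨i⟩
  obtain ⟨j, hj⟩ := exists_eq_ciInf_of_finite (f := v)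
  rw [div_mul_eq_mul_div, ← hj, le_div_iff₀ (hv j), hj]
  gcongr
  exact ciInf_le (Set.finite_range v).bddBelow i

lemma vnorm_le_norm_div_iInf (hv : ∀ i, 0 < v i) (x : Fin n → ℝ) :
    vnorm v x ≤ ‖x‖ / ⨅ i, v i :=
  vnorm_le hv (div_nonneg (norm_nonneg x) (Real.iInf_nonneg fun i => (hv i).le)) fun i =>
    (norm_le_pi_norm x i).trans (le_div_iInf_mul hv (norm_nonneg x) i)

lemma continuous_of_vnorm_sub_le (hv : ∀ i, 0 < v i) {F : (Fin n → ℝ) → Fin n → ℝ} {K : ℝ}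
    (hK : 0 ≤ K) (hF : ∀ x y, vnorm v (F x - F y) ≤ K * vnorm v (x - y)) : Continuous F := by
  refine continuous_pi fun i => (LipschitzWith.of_dist_le'
    (K := K / (⨅ j, v j) * v i) fun x y => ?_).continuous
  calc dist (F x i) (F y i) ≤ vnorm v (F x - F y) * v i :=
        abs_apply_le_vnorm_mul hv (F x - F y) i
    _ ≤ K * (‖x - y‖ / ⨅ j, v j) * v i := by
        have := (hv i).le
        grw [hF, vnorm_le_norm_div_iInf hv]
    _ = K / (⨅ j, v j) * v i * dist x y := by
        rw [dist_eq_norm]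
        ring

end WeightedNorm

section Scheme

variable {Ω : Type*} {m0 : MeasurableSpace Ω} {μ : Measure Ω} {ℱ : Filtration ℕ m0}

lemma measurable_iterates {ι : Type*} [MeasurableSpace ι] [MeasurableSingletonClass ι]
    [DecidableEq ι] {F : (ι → ℝ) → ι → ℝ} (hF : Measurable F) {idx : ℕ → Ω → ι}
    (hidx : ∀ t, Measurable[ℱ t] (idx t)) {w : ℕ → Ω → ℝ}
    (hw : ∀ t, Measurable[ℱ (t + 1)] (w t)) {α : ℕ → ℝ} {X : ℕ → Ω → ι → ℝ}
    (hX0 : Measurable[ℱ 0] (X 0))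
    (hX : ∀ t ω i, X (t + 1) ω i =
      if i = idx t ω then X t ω i + α t * (F (X t ω) i - X t ω i + w t ω) else X t ω i) (t : ℕ) :
    Measurable[ℱ t] (X t) := by
  induction t with
  | zero => exact hX0
  | succ t ih =>
    have hle : ℱ t ≤ ℱ (t + 1) := ℱ.mono t.le_succ
    have hXt : Measurable[ℱ (t + 1)] (X t) := ih.mono hle le_rfl
    refine @measurable_pi_lambda _ _ _ (ℱ (t + 1)) _ _ fun i => ?_
    have hXi : Measurable[ℱ (t + 1)] fun ω => X t ω i := (measurable_pi_apply i).comp hXt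
    have hFi : Measurable[ℱ (t + 1)] fun ω => F (X t ω) i :=
      (measurable_pi_apply i).comp (hF.comp hXt)
    have hi : MeasurableSet[ℱ (t + 1)] {ω | i = idx t ω} := by
      simp_rw [eq_comm (a := i)]
      exact (hidx t).mono hle le_rfl (measurableSet_singleton i)
    simp_rw [hX]
    exact .ite hi (hXi.add (((hFi.sub hXi).add (hw t)).const_mul (α t))) hXi

lemma ofReal_one_sub_le_measure [IsProbabilityMeasure μ] {s : Set Ω} {δ : ℝ} (hδ : 0 ≤ δ)
    (hs : μ sᶜ ≤ ENNReal.ofReal δ) : ENNReal.ofReal (1 - δ) ≤ μ s := by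
  rw [ENNReal.ofReal_sub _ hδ, ENNReal.ofReal_one, tsub_le_iff_right]
  calc 1 = μ Set.univ := measure_univ.symm
    _ ≤ μ s + μ sᶜ := measure_univ_le_add_compl s
    _ ≤ μ s + ENNReal.ofReal δ := by gcongr

end Scheme

section Concentration

open ProbabilityTheory Real
open scoped NNReal

variable {Ω : Type*} {m0 : MeasurableSpace Ω} {μ : Measure Ω}
  [IsZeroOrProbabilityMeasure μ] {ℱ : Filtration ℕ m0} {τ : ℕ} {α : ℕ → ℝ} {h t₀ σ : ℝ}

lemma hasSubgaussianMGF_sum_dampedWeight {Y : ℕ → Ω → ℝ} {B : ℝ}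
    (hY : BoundedLaggedMartingaleDiff μ ℱ τ Y fun _ => B) (hα : ∀ t, α t = h / (t + t₀))
    (hσ : 0 < σ) (hσh : 2 ≤ σ * h) (ht₀ : σ * h ≤ t₀) {s : ℕ} (hs : 0 < s) (t : ℕ) :
    HasSubgaussianMGF (fun ω => ∑ k ∈ Icc s t, dampedWeight α σ t k * Y k ω)
      (2 * ((τ + 1) * h / (σ * (t + 1 + t₀))) * B ^ 2).toNNReal μ := by
  refine hasSubgaussianMGF_mono ((hY.const_mul (dampedWeight α σ t)).hasSubgaussianMGF_sum _) ?_
  refine NNReal.le_toNNReal_of_coe_le ?_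
  push_cast
  simp only [norm_eq_abs, sq_abs, abs_mul, abs_abs, mul_pow, ← sum_mul]
  calc (τ + 1) * ((∑ k ∈ Icc s t, dampedWeight α σ t k ^ 2) * B ^ 2)
      ≤ (τ + 1) * ((∑ k ∈ Icc 1 t, dampedWeight α σ t k ^ 2) * B ^ 2) := by
        gcongr
        exact hs
    _ ≤ (τ + 1) * (2 * h / (σ * (t + 1 + t₀)) * B ^ 2) := by
        grw [sum_sq_dampedWeight_le hα hσ hσh ht₀]
    _ = 2 * ((τ + 1) * h / (σ * (t + 1 + t₀))) * B ^ 2 := by ring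

lemma sqrt_two_mul_toNNReal_mul {V : ℝ} (hV : 0 ≤ V) (b L : ℝ) :
    √(2 * (2 * V * b ^ 2).toNNReal * L) = 2 * |b| * √(V * L) := by
  rw [coe_toNNReal _ (by positivity)]
  calc √(2 * (2 * V * b ^ 2) * L) = √((2 * b) ^ 2 * (V * L)) := by ring_nf
    _ = 2 * |b| * √(V * L) := by
      rw [sqrt_mul (sq_nonneg _), sqrt_sq_eq_abs, abs_mul, abs_two]

/-- Damping reduces the random products to the deterministic suffix sums, so the union bound ranges
over the coordinates and the starting points in `[s, t]`. -/
lemma measure_exists_lt_abs_sum_mul_prod_le {ι : Type*} [Fintype ι] {Y : ι → ℕ → Ω → ℝ} {B : ι → ℝ}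
    (hY : ∀ i, BoundedLaggedMartingaleDiff μ ℱ τ (Y i) fun _ => B i) {d : ℕ → ι → Ω → ℝ} {s t : ℕ}
    (hd : ∀ l i, s ≤ l → ∀ᵐ ω ∂μ, d l i ω ∈ Set.Icc σ 1) (hα : ∀ t, α t = h / (t + t₀))
    (hσ : 0 < σ) (hσ1 : σ ≤ 1) (hσh : 2 ≤ σ * h) (ht₀ : h < t₀) (hs : 0 < s) (hst : s ≤ t)
    {N δ : ℝ} (hN : t * Fintype.card ι ≤ N) (hδ0 : 0 < δ) (hδ1 : δ ≤ 1) :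
    μ {ω | ∃ i, 2 * |B i| * √((τ + 1) * h / (σ * (t + 1 + t₀)) * log (2 * N / δ)) <
        |∑ k ∈ Icc s t, α k * ((∏ l ∈ Icc (k + 1) t, (1 - α l * d l i ω)) * Y i k ω)|} ≤
      ENNReal.ofReal δ := by
  have hh : 0 < h := pos_of_mul_pos_right (two_pos.trans_le hσh) hσ.le
  have ht₀0 : 0 < t₀ := hh.trans ht₀
  have hsub : ∀ p ∈ (univ : Finset ι) ×ˢ Icc s t, HasSubgaussianMGF _ _ μ := fun p hp =>
    hasSubgaussianMGF_sum_dampedWeight (hY p.1) hα hσ hσh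
      ((mul_le_of_le_one_left hh.le hσ1).trans ht₀.le)
      (hs.trans_le (mem_Icc.mp (mem_product.mp hp).2).1) t
  have hcard : (#((univ : Finset ι) ×ˢ Icc s t) : ℝ) ≤ N := by
    refine le_trans ?_ hN
    rw [card_product, Nat.card_Icc, card_univ, mul_comm]
    exact_mod_cast Nat.mul_le_mul_right _ (by lia)
  have hdamp : ∀ᵐ ω ∂μ, ∀ l i, s ≤ l → d l i ω ∈ Set.Icc σ 1 := by
    simpa only [ae_all_iff] using hd
  refine (measure_mono_ae ?_).trans (measure_exists_sqrt_log_lt_abs_le hsub hcard hδ0 hδ1)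
  filter_upwards [hdamp] with ω hω ⟨i, hi⟩
  by_contra hgood
  refine hi.not_ge (abs_sum_mul_prod_le_of_suffix hst (fun l _ => ?_)
    (fun l hl => hω l i (by grind)) fun j hj => ?_)
  · rw [hα]
    exact ⟨by positivity, (div_lt_one (by positivity)).mpr
      (by linarith [Nat.cast_nonneg (α := ℝ) l])⟩
  · rw [← sqrt_two_mul_toNNReal_mul (by positivity)]
    exact not_lt.mp fun hlarge => hgood ⟨(i, j), mk_mem_product (mem_univ i) hj, hlarge⟩

end Concentration

section NoiseVector

open ProbabilityTheory

variable {Ω : Type*} {m0 : MeasurableSpace Ω} {μ : Measure Ω}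
  {ℱ : Filtration ℕ m0} {n : ℕ} {v : Fin n → ℝ} {F : (Fin n → ℝ) → Fin n → ℝ} {C : ℝ}

lemma ite_one_zero_mem_Icc (p : Prop) [Decidable p] :
    (if p then (1 : ℝ) else 0) ∈ Set.Icc 0 1 := by
  split_ifs <;> simp

lemma measurable_indicator_eq {_ : MeasurableSpace Ω} {ι : Type*} [MeasurableSpace ι]
    [MeasurableSingletonClass ι] [DecidableEq ι] {idx : Ω → ι} (hidx : Measurable idx) (i : ι) :
    Measurable fun ω => if idx ω = i then (1 : ℝ) else 0 :=
  .ite (hidx (measurableSet_singleton i)) measurable_const measurable_const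

lemma boundedLaggedMartingaleDiff_noise [IsFiniteMeasure μ] (hv : ∀ i, 0 < v i)
    (hF : Measurable F) (hFbd : ∀ x, vnorm v (F x) ≤ vnorm v x + C) {idx : ℕ → Ω → Fin n}
    (hidx : ∀ t, Measurable[ℱ t] (idx t)) {X : ℕ → Ω → Fin n → ℝ}
    (hX : ∀ t, Measurable[ℱ t] (X t)) {xbar : ℝ} (hXbd : ∀ t, ∀ᵐ ω ∂μ, vnorm v (X t ω) ≤ xbar)
    {w : ℕ → Ω → ℝ} {wbar : ℝ} (hw : ∀ t, Measurable[ℱ (t + 1)] (w t))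
    (hw0 : ∀ t, μ[w t | ℱ t] =ᵐ[μ] 0) (hwb : ∀ t, ∀ᵐ ω ∂μ, |w t ω| ≤ wbar) {τ : ℕ}
    {d : ℕ → Fin n → Ω → ℝ}
    (hd : ∀ t i, d t i = μ[(fun ω => if idx t ω = i then (1 : ℝ) else 0) | ℱ (t - τ)])
    {eps : ℕ → Ω → Fin n → ℝ}
    (heps : ∀ t ω i, eps t ω i =
      ((if idx t ω = i then (1 : ℝ) else 0) - d t i ω) *
          (F (X (t - τ) ω) i - X (t - τ) ω i) +
        (if idx t ω = i then w t ω else 0)) (i : Fin n) :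
    BoundedLaggedMartingaleDiff μ ℱ τ (fun k ω => eps k ω i)
      fun _ => (2 * xbar + C + wbar / ⨅ j, v j) * v i := by
  have hdrift (k) : ∀ᵐ ω ∂μ, |F (X (k - τ) ω) i - X (k - τ) ω i| ≤ (2 * xbar + C) * v i := by
    filter_upwards [hXbd (k - τ)] with ω hω
    have := (hv i).le
    calc |F (X (k - τ) ω) i - X (k - τ) ω i| ≤ |F (X (k - τ) ω) i| + |X (k - τ) ω i| := abs_sub _ _
      _ ≤ vnorm v (F (X (k - τ) ω)) * v i + vnorm v (X (k - τ) ω) * v i :=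
        add_le_add (abs_apply_le_vnorm_mul hv _ i) (abs_apply_le_vnorm_mul hv _ i)
      _ ≤ (xbar + C) * v i + xbar * v i := by grw [hFbd, hω]
      _ = (2 * xbar + C) * v i := by ring
  have hnoise (k) : ∀ᵐ ω ∂μ, |w k ω| ≤ wbar / (⨅ j, v j) * v i := by
    filter_upwards [hwb k] with ω hω
    exact hω.trans (le_div_iInf_mul hv ((abs_nonneg _).trans hω) i)
  have hcoord (k) : (fun ω => eps k ω i) =
      (fun ω => F (X (k - τ) ω) i - X (k - τ) ω i) *
          ((fun ω => if idx k ω = i then (1 : ℝ) else 0) -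
            μ[(fun ω => if idx k ω = i then (1 : ℝ) else 0) | ℱ (k - τ)]) +
        (fun ω => if idx k ω = i then (1 : ℝ) else 0) * w k := by
    ext ω
    simp [heps, hd, mul_comm]
  simp_rw [funext hcoord, add_mul (2 * xbar + C) _ (v i)]
  exact boundedLaggedMartingaleDiff_centred_mul_add_mul
    (fun k => measurable_indicator_eq (hidx k) i) (fun k ω => ite_one_zero_mem_Icc (idx k ω = i))
    (fun k => ((measurable_pi_apply i).comp (hF.comp (hX _))).sub
      ((measurable_pi_apply i).comp (hX _))) hdrift hw hnoise hw0

theorem SA_eps_weighted_sum_bound_general [IsProbabilityMeasure μ] (hv : ∀ i, 0 < v i)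
    (hF : Measurable F) (hFbd : ∀ x, vnorm v (F x) ≤ vnorm v x + C) {idx : ℕ → Ω → Fin n}
    (hidx : ∀ t, Measurable[ℱ t] (idx t)) {X : ℕ → Ω → Fin n → ℝ}
    (hX : ∀ t, Measurable[ℱ t] (X t)) {xbar : ℝ} (hXbd : ∀ t, ∀ᵐ ω ∂μ, vnorm v (X t ω) ≤ xbar)
    {w : ℕ → Ω → ℝ} {wbar : ℝ} (hw : ∀ t, Measurable[ℱ (t + 1)] (w t))
    (hw0 : ∀ t, μ[w t | ℱ t] =ᵐ[μ] 0) (hwb : ∀ t, ∀ᵐ ω ∂μ, |w t ω| ≤ wbar)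
    {sg : ℝ} {τ : ℕ} (hsg0 : 0 < sg) (hsg1 : sg ≤ 1) (hτ : 0 < τ) {d : ℕ → Fin n → Ω → ℝ}
    (hd : ∀ t i, d t i = μ[(fun ω => if idx t ω = i then (1 : ℝ) else 0) | ℱ (t - τ)])
    (hexpl : ∀ (i : Fin n) (t : ℕ), τ ≤ t → ∀ᵐ ω ∂μ, sg ≤ d t i ω)
    {α : ℕ → ℝ} {h t0 : ℝ} (hh : 2 / sg ≤ h) (ht0 : h < t0) (hstep : ∀ t, α t = h / (t + t0))
    {eps : ℕ → Ω → Fin n → ℝ}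
    (heps : ∀ t ω i, eps t ω i =
      ((if idx t ω = i then (1 : ℝ) else 0) - d t i ω) *
          (F (X (t - τ) ω) i - X (t - τ) ω i) +
        (if idx t ω = i then w t ω else 0)) {t : ℕ} (ht : τ ≤ t) {δ : ℝ} (hδ0 : 0 < δ)
    (hδ1 : δ ≤ 1) :
    ENNReal.ofReal (1 - δ) ≤
      μ {ω | vnorm v (fun i => ∑ k ∈ Icc τ t,
          α k * ((∏ l ∈ Icc (k + 1) t, (1 - α l * d l i ω)) * eps k ω i)) ≤
        6 * (2 * xbar + C + wbar / ⨅ i, v i) *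
          √((τ + 1) * h / (sg * (t + 1 + t0)) * Real.log (2 * (τ + 1) * t * n / δ))} := by
  have he : 0 ≤ 2 * xbar + C + wbar / ⨅ i, v i := by
    obtain ⟨ω, hx, hwω⟩ := ((hXbd 0).and (hwb 0)).exists
    have hdrift := (vnorm_nonneg (fun i => (hv i).le) _).trans (hFbd (X 0 ω))
    have hnoise := div_nonneg ((abs_nonneg _).trans hwω) (Real.iInf_nonneg fun i => (hv i).le)
    linarith [vnorm_nonneg (fun i => (hv i).le) (X 0 ω)]
  have hprob : ∀ l i, τ ≤ l → ∀ᵐ ω ∂μ, d l i ω ∈ Set.Icc sg 1 := fun l i hl => by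
    have hd01 := condExp_mem_Icc (μ := μ) (ℱ.le (l - τ))
      ((measurable_indicator_eq (hidx l) i).mono (ℱ.le l) le_rfl).aestronglyMeasurable
      (ae_of_all _ fun ω => ite_one_zero_mem_Icc (idx l ω = i))
    rw [← hd] at hd01
    filter_upwards [hd01, hexpl i l hl] with ω h01 hsg using ⟨hsg, h01.2⟩
  have hN : (t : ℝ) * Fintype.card (Fin n) ≤ (τ + 1) * t * n := by
    rw [Fintype.card_fin, mul_assoc]
    exact le_mul_of_one_le_left (by positivity) (by simp)
  rw [show 2 * (τ + 1) * t * n / δ = 2 * ((τ + 1) * t * n) / δ by ring]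
  refine ofReal_one_sub_le_measure hδ0.le (le_trans (measure_mono fun ω hω => ?_)
    (measure_exists_lt_abs_sum_mul_prod_le
      (boundedLaggedMartingaleDiff_noise hv hF hFbd hidx hX hXbd hw hw0 hwb hd heps) hprob hstep
      hsg0 hsg1 ((div_le_iff₀' hsg0).mp hh) ht0 hτ ht hN hδ0 hδ1))
  by_contra hgood
  refine hω (vnorm_le hv (by positivity) fun i => (not_lt.mp fun hi => hgood ⟨i, hi⟩).trans ?_)
  have := (hv i).le
  rw [abs_of_nonneg (by positivity), mul_right_comm _ _ (v i), ← mul_assoc]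
  gcongr
  norm_num

end NoiseVector

/-- **Lemma 5.** Under Assumptions 1, 2 and 3, the almost-sure bound `‖x(t)‖_v ≤ x̄`, and
step sizes `α_t = h/(t+t₀)` with `h > 2/σ`, `t₀ ≥ max(4h, τ)`, for each `t ≥ τ` and each
`δ ∈ (0,1)`, with probability at least `1-δ`,
`‖Σ_{k=τ}^t α_k B̃_{k,t} ε(k)‖_v ≤ 6ε̄ √(((τ+1)h/(σ(t+1+t₀)))·log(2(τ+1)tn/δ))`,
where `ε̄ = 2x̄ + C + w̄/v̲`. -/
theorem SA_eps_weighted_sum_bound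
    {Ω : Type*} {m0 : MeasurableSpace Ω} (μ : Measure Ω) [IsProbabilityMeasure μ]
    (ℱ : Filtration ℕ m0)
    (n : ℕ) (hn : 0 < n) (v : Fin n → ℝ) (hv : ∀ i, 0 < v i)
    -- Assumption 1 (contraction)
    (F : (Fin n → ℝ) → (Fin n → ℝ)) (γ C : ℝ) (hγ0 : 0 < γ) (hγ1 : γ < 1) (hC : 0 < C)
    (hcontr : ∀ x y, vnorm v (F x - F y) ≤ γ * vnorm v (x - y))
    (hFbd : ∀ x, vnorm v (F x) ≤ γ * vnorm v x + C)
    (xstar : Fin n → ℝ) (hfix : F xstar = xstar)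
    -- the asynchronous SA scheme
    (idx : ℕ → Ω → Fin n) (hidx : ∀ t, Measurable[ℱ t] (idx t))
    (w : ℕ → Ω → ℝ) (wbar : ℝ)
    (α : ℕ → ℝ) (hα : ∀ t, α t ∈ Set.Ioc (0 : ℝ) 1)
    (X : ℕ → Ω → Fin n → ℝ) (hX0 : ∀ ω, X 0 ω = 0)
    (hupd : ∀ t ω i, X (t + 1) ω i =
      if i = idx t ω then X t ω i + α t * (F (X t ω) i - X t ω i + w t ω) else X t ω i)
    -- Assumption 2 (martingale difference noise)
    (hw_meas : ∀ t, Measurable[ℱ (t + 1)] (w t))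
    (hw_mean : ∀ t, μ[w t | ℱ t] =ᵐ[μ] 0)
    (hw_bd : ∀ t, ∀ᵐ ω ∂μ, |w t ω| ≤ wbar)
    -- Assumption 3 (sufficient exploration), with `d_{t,i} = P(i_t = i | ℱ_{t-τ})`
    (sg : ℝ) (τ : ℕ) (hsg0 : 0 < sg) (hsg1 : sg < 1) (hτ : 0 < τ)
    (d : ℕ → Fin n → Ω → ℝ)
    (hd : ∀ t i, d t i = μ[(fun ω => if idx t ω = i then (1 : ℝ) else 0) | ℱ (t - τ)])
    (hexpl : ∀ (i : Fin n) (t : ℕ), τ ≤ t → ∀ᵐ ω ∂μ, sg ≤ d t i ω)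
    -- step sizes
    (h t0 : ℝ) (hh : 2 / sg < h) (ht0 : max (4 * h) (τ : ℝ) ≤ t0)
    (hstep : ∀ t, α t = h / ((t : ℝ) + t0))
    -- almost sure boundedness of the iterates
    (xbar : ℝ) (hXbd : ∀ t, ∀ᵐ ω ∂μ, vnorm v (X t ω) ≤ xbar)
    -- the noise vector `ε(t)`
    (eps : ℕ → Ω → Fin n → ℝ)
    (heps : ∀ t ω i, eps t ω i =
      ((if idx t ω = i then (1 : ℝ) else 0) - d t i ω) *
          (F (X (t - τ) ω) i - X (t - τ) ω i) +
        (if idx t ω = i then w t ω else 0)) :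
    ∀ t, τ ≤ t → ∀ δ : ℝ, 0 < δ → δ < 1 →
      ENNReal.ofReal (1 - δ) ≤
        μ {ω | vnorm v (fun i => ∑ k ∈ Finset.Icc τ t,
            α k * ((∏ ℓ ∈ Finset.Icc (k + 1) t, (1 - α ℓ * d ℓ i ω)) * eps k ω i)) ≤
          6 * (2 * xbar + C + wbar / ⨅ i, v i) *
            Real.sqrt ((((τ : ℝ) + 1) * h / (sg * ((t : ℝ) + 1 + t0))) *
              Real.log (2 * ((τ : ℝ) + 1) * (t : ℝ) * (n : ℝ) / δ))} := by
  have hFm : Measurable F := (continuous_of_vnorm_sub_le hv hγ0.le hcontr).measurable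
  have hFbd' (x) : vnorm v (F x) ≤ vnorm v x + C := by
    grw [hFbd, mul_le_of_le_one_left (vnorm_nonneg (fun i => (hv i).le) x) hγ1.le]
  have hXm := measurable_iterates hFm hidx hw_meas (funext hX0 ▸ measurable_const) hupd
  have hht0 : h < t0 := by linarith [le_max_left (4 * h) (τ : ℝ), div_pos two_pos hsg0]
  exact fun t ht δ hδ0 hδ1 => SA_eps_weighted_sum_bound_general hv hFm hFbd' hidx hXm hXbd hw_meas
    hw_mean hw_bd hsg0 hsg1.le hτ hd hexpl hh.le hht0 hstep heps ht hδ0 hδ1.le
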